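/- Let d be a positive integer, ν₁, …, ν_d real numbers with ν_j > −1 for each j, set ν = ν₁ + ⋯ + ν_d, let λ be a complex number with Re(λ) + ν > −1, let a₁, …, a_d > 0 and p > a₁ + ⋯ + a_d be real. Then ∫₀^∞ e^{−px} x^λ ∏_{j=1}^d I_{ν_j}(a_j x) dx = (Γ(λ+ν+1)/(2^ν p^{λ+ν+1})) · (∏_{j=1}^d a_j^{ν_j}/Γ(ν_j+1)) · ∑_{n₁≥0} ⋯ ∑_{n_d≥0} ((λ+ν+1)/2)_{n₁+⋯+n_d} ((λ+ν)/2+1)_{n₁+⋯+n_d} / ((ν₁+1)_{n₁} ⋯ (ν_d+1)_{n_d}) · ∏_{j=1}^d (a_j²/p²)^{n_j}/(n_j!), and the integral converges absolutely. -/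

import Mathlib

open MeasureTheory Real Finset Complex

/-- The modified Bessel function of the first kind of real order `ν`,
`I_ν(x) = ∑_{k ≥ 0} (x/2)^{ν+2k} / (k! Γ(ν+k+1))` (for `x > 0`). -/
noncomputable def besselI (ν x : ℝ) : ℝ :=
  ∑' k : ℕ, (x / 2) ^ (ν + 2 * (k : ℝ)) / ((k.factorial : ℝ) * Real.Gamma (ν + k + 1))

theorem hasSum_prod_pi_of_nonneg {ι : Type*} {d : ℕ} {f : Fin d → ι → ℝ} {s : Fin d → ℝ}
    (hf₀ : ∀ j i, 0 ≤ f j i) (hf : ∀ j, HasSum (f j) (s j)) :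
    HasSum (fun n : Fin d → ι ↦ ∏ j, f j (n j)) (∏ j, s j) := by
  induction d with
  | zero =>
    simp only [Finset.univ_eq_empty, Finset.prod_empty]
    exact hasSum_unique (fun _ : Fin 0 → ι ↦ (1 : ℝ))
  | succ d ih =>
    have h := ih (fun j ↦ hf₀ j.succ) (fun j ↦ hf j.succ)
    have h₂ : ∀ g : (Fin d → ι) → ℝ, (∀ n, 0 ≤ g n) → ∀ t, HasSum g t →
        HasSum (fun q : ι × (Fin d → ι) ↦ f 0 q.1 * g q.2) (s 0 * t) := fun g hg₀ t hg ↦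
      (hf 0).mul hg ((hf 0).summable.mul_of_nonneg hg.summable (hf₀ 0) hg₀)
    have h₃ := h₂ _ (fun n ↦ Finset.prod_nonneg fun j _ ↦ hf₀ j.succ (n j)) _ h
    rw [Fin.prod_univ_succ, ← (Fin.consEquiv fun _ ↦ ι).hasSum_iff]
    simpa [Function.comp_def, Fin.prod_univ_succ, Fin.consEquiv] using h₃

theorem factorial_two_mul_le (k : ℕ) : ((2 * k).factorial : ℝ) ≤ 4 ^ k * (k.factorial : ℝ) ^ 2 := by
  induction k with
  | zero => simp
  | succ k ih =>
    rw [show 2 * (k + 1) = 2 * k + 1 + 1 by ring, Nat.factorial_succ, Nat.factorial_succ,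
      Nat.factorial_succ k]
    push_cast
    calc (2 * (k : ℝ) + 1 + 1) * ((2 * k + 1) * ((2 * k).factorial : ℝ))
        ≤ (2 * (k : ℝ) + 1 + 1) * ((2 * k + 1 + 1) * (4 ^ k * (k.factorial : ℝ) ^ 2)) := by
          gcongr
          linarith
      _ = _ := by ring

theorem factorial_mul_Gamma_le {μ : ℝ} (hμ : 1 ≤ μ) (k : ℕ) :
    (k.factorial : ℝ) * Real.Gamma μ ≤ Real.Gamma (μ + k) := by
  induction k with
  | zero => simp
  | succ k ih =>
    have hk : (0 : ℝ) < μ + k := by positivity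
    rw [Nat.factorial_succ]
    push_cast
    rw [← add_assoc, Real.Gamma_add_one hk.ne', mul_assoc]
    have := Real.Gamma_pos_of_pos (zero_lt_one.trans_le hμ)
    exact mul_le_mul (by linarith) ih (by positivity) hk.le

theorem exists_factorial_two_mul_le {ν r : ℝ} (hν : -1 < ν) (hr : 1 < r) :
    ∃ C : ℝ, 0 < C ∧ ∀ k : ℕ, ((2 * k).factorial : ℝ) ≤
      C * r ^ (2 * k) * (4 ^ k * (k.factorial * Real.Gamma (ν + k + 1))) := by
  have hΓ : 0 < Real.Gamma (ν + 2) := Real.Gamma_pos_of_pos (by linarith)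
  have hr₀ : 0 < r - 1 := by linarith
  have hν₀ : 0 < ν + 1 := by linarith
  refine ⟨(ν + 1 + 1 / (r - 1)) / Real.Gamma (ν + 2), by positivity, fun k ↦ ?_⟩
  have hk : 0 < ν + k + 1 := by linarith [k.cast_nonneg (α := ℝ)]
  have h₁ := factorial_mul_Gamma_le (μ := ν + 2) (by linarith) k
  rw [show ν + 2 + k = ν + k + 1 + 1 by ring, Real.Gamma_add_one hk.ne'] at h₁
  have h₂ : ν + k + 1 ≤ (ν + 1 + 1 / (r - 1)) * r ^ (2 * k) := by
    have h := one_add_mul_le_pow (a := r - 1) (by linarith) (2 * k)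
    rw [add_sub_cancel] at h
    push_cast at h
    have h' : (k : ℝ) ≤ 1 / (r - 1) * r ^ (2 * k) := by
      rw [one_div, inv_mul_eq_div, le_div_iff₀ hr₀]
      nlinarith [mul_nonneg (k.cast_nonneg (α := ℝ)) hr₀.le]
    nlinarith [one_le_pow₀ hr.le (n := 2 * k)]
  have hΓk := Real.Gamma_pos_of_pos hk
  calc ((2 * k).factorial : ℝ) ≤ 4 ^ k * k.factorial * k.factorial := by
        rw [mul_assoc, ← sq]; exact factorial_two_mul_le k
    _ ≤ 4 ^ k * k.factorial * ((ν + k + 1) * Real.Gamma (ν + k + 1) / Real.Gamma (ν + 2)) := by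
        gcongr
        rwa [le_div_iff₀ hΓ]
    _ ≤ 4 ^ k * k.factorial * ((ν + 1 + 1 / (r - 1)) * r ^ (2 * k) * Real.Gamma (ν + k + 1) /
          Real.Gamma (ν + 2)) := by gcongr
    _ = _ := by ring

theorem besselI_term_pos {ν x : ℝ} (hν : -1 < ν) (hx : 0 < x) (k : ℕ) :
    0 < (x / 2) ^ (ν + 2 * (k : ℝ)) / ((k.factorial : ℝ) * Real.Gamma (ν + k + 1)) := by
  have := Real.Gamma_pos_of_pos (s := ν + k + 1) (by linarith [k.cast_nonneg (α := ℝ)])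
  positivity

theorem exists_besselI_term_le {ν r : ℝ} (hν : -1 < ν) (hr : 1 < r) :
    ∃ C : ℝ, 0 < C ∧ ∀ x : ℝ, 0 < x → ∀ k : ℕ,
      (x / 2) ^ (ν + 2 * (k : ℝ)) / ((k.factorial : ℝ) * Real.Gamma (ν + k + 1)) ≤
        C * x ^ ν * ((r * x) ^ (2 * k) / ((2 * k).factorial : ℝ)) := by
  obtain ⟨C, hC, h⟩ := exists_factorial_two_mul_le hν hr
  refine ⟨C / 2 ^ ν, by positivity, fun x hx k ↦ ?_⟩
  have hΓ := Real.Gamma_pos_of_pos (s := ν + k + 1) (by linarith [k.cast_nonneg (α := ℝ)])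
  have hpow : (x / 2) ^ (ν + 2 * (k : ℝ)) = x ^ ν / 2 ^ ν * (x ^ (2 * k) / 4 ^ k) := by
    rw [Real.rpow_add (by positivity), Real.div_rpow hx.le zero_le_two,
      show 2 * (k : ℝ) = ((2 * k : ℕ) : ℝ) by push_cast; rfl, Real.rpow_natCast, div_pow,
      pow_mul 2 2 k]
    norm_num
  rw [hpow, div_le_iff₀ (by positivity), mul_pow]
  have := h k
  calc x ^ ν / 2 ^ ν * (x ^ (2 * k) / 4 ^ k)
      = x ^ ν / 2 ^ ν * (x ^ (2 * k) / 4 ^ k) / (2 * k).factorial * (2 * k).factorial := by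
        field_simp
    _ ≤ x ^ ν / 2 ^ ν * (x ^ (2 * k) / 4 ^ k) / (2 * k).factorial *
          (C * r ^ (2 * k) * (4 ^ k * (k.factorial * Real.Gamma (ν + k + 1)))) := by gcongr
    _ = _ := by field_simp

theorem hasSum_besselI {ν x : ℝ} (hν : -1 < ν) (hx : 0 < x) :
    HasSum (fun k : ℕ ↦
      (x / 2) ^ (ν + 2 * (k : ℝ)) / ((k.factorial : ℝ) * Real.Gamma (ν + k + 1)))
      (besselI ν x) := by
  obtain ⟨C, -, h⟩ := exists_besselI_term_le hν one_lt_two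
  exact (Summable.of_nonneg_of_le (fun k ↦ (besselI_term_pos hν hx k).le) (h x hx)
    ((Real.hasSum_cosh (2 * x)).summable.mul_left _)).hasSum

theorem besselI_nonneg {ν x : ℝ} (hν : -1 < ν) (hx : 0 < x) : 0 ≤ besselI ν x :=
  tsum_nonneg fun k ↦ (besselI_term_pos hν hx k).le

theorem exists_besselI_le {ν r : ℝ} (hν : -1 < ν) (hr : 1 < r) :
    ∃ C : ℝ, 0 < C ∧ ∀ x : ℝ, 0 < x → besselI ν x ≤ C * x ^ ν * Real.exp (r * x) := by
  obtain ⟨C, hC, h⟩ := exists_besselI_term_le hν hr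
  refine ⟨C, hC, fun x hx ↦ ?_⟩
  calc besselI ν x ≤ C * x ^ ν * Real.cosh (r * x) :=
        hasSum_le (h x hx) (hasSum_besselI hν hx) ((Real.hasSum_cosh _).mul_left _)
    _ ≤ _ := by
        gcongr
        rw [Real.cosh_eq]
        have : Real.exp (-(r * x)) ≤ Real.exp (r * x) := by
          gcongr
          have : 0 < r * x := by positivity
          linarith
        linarith

theorem measurable_besselI (ν : ℝ) : Measurable (besselI ν) := by
  unfold besselI
  exact Measurable.tsum fun k ↦ by fun_prop

theorem Complex.Gamma_add_two_mul_natCast {z : ℂ} (hz : 0 < z.re) (n : ℕ) :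
    Complex.Gamma (z + 2 * n) = Complex.Gamma z *
      (4 ^ n * (ascPochhammer ℂ n).eval (z / 2) * (ascPochhammer ℂ n).eval ((z + 1) / 2)) := by
  induction n with
  | zero => simp
  | succ n ih =>
    have h₀ : z + 2 * n ≠ 0 := fun h ↦ by
      have := congrArg Complex.re h
      simp at this
      linarith [n.cast_nonneg (α := ℝ)]
    have h₁ : z + 2 * n + 1 ≠ 0 := fun h ↦ by
      have := congrArg Complex.re h
      simp at this
      linarith [n.cast_nonneg (α := ℝ)]
    rw [show z + 2 * ((n + 1 : ℕ) : ℂ) = z + 2 * n + 1 + 1 by push_cast; ring,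
      Complex.Gamma_add_one _ h₁, Complex.Gamma_add_one _ h₀, ih, ascPochhammer_succ_eval,
      ascPochhammer_succ_eval]
    ring

theorem Real.Gamma_add_natCast {s : ℝ} (hs : 0 < s) (n : ℕ) :
    Real.Gamma (s + n) = Real.Gamma s * (ascPochhammer ℝ n).eval s := by
  induction n with
  | zero => simp
  | succ n ih =>
    rw [Nat.cast_succ, ← add_assoc, Real.Gamma_add_one (by positivity), ih,
      ascPochhammer_succ_eval]
    ring

theorem Complex.ofReal_cpow_mul_prod_rpow {ι : Type*} (s : Finset ι) (z : ℂ) (f : ι → ℝ) {x : ℝ}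
    (hx : 0 < x) :
    (x : ℂ) ^ z * ((∏ j ∈ s, x ^ f j : ℝ) : ℂ) = (x : ℂ) ^ (z + (∑ j ∈ s, f j : ℝ)) := by
  rw [← Real.rpow_sum_of_pos hx, Complex.ofReal_cpow hx.le,
    ← Complex.cpow_add _ _ (Complex.ofReal_ne_zero.2 hx.ne')]

/-- The termwise Laplace transform of the product of the Bessel series. -/
theorem integral_laplace_prod_besselI_term {d : ℕ} {ν a : Fin d → ℝ} {lam : ℂ} {p : ℝ}
    (hν : ∀ j, -1 < ν j) (hl : -1 < lam.re + ∑ j, ν j) (ha : ∀ j, 0 < a j) (hp : 0 < p)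
    (n : Fin d → ℕ) :
    ∫ x in Set.Ioi (0 : ℝ), Complex.exp (-(p : ℂ) * x) * (x : ℂ) ^ lam *
        ((∏ j, (a j * x / 2) ^ (ν j + 2 * (n j : ℝ)) /
          (((n j).factorial : ℝ) * Real.Gamma (ν j + n j + 1)) : ℝ) : ℂ) =
      Complex.Gamma (lam + (∑ j, ν j : ℝ) + 1) /
          ((2 : ℂ) ^ ((∑ j, ν j : ℝ) : ℂ) * (p : ℂ) ^ (lam + (∑ j, ν j : ℝ) + 1)) *
        (∏ j, ((a j ^ (ν j) / Real.Gamma (ν j + 1) : ℝ) : ℂ)) *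
        ((ascPochhammer ℂ (∑ j, n j)).eval ((lam + (∑ j, ν j : ℝ) + 1) / 2) *
            (ascPochhammer ℂ (∑ j, n j)).eval ((lam + (∑ j, ν j : ℝ)) / 2 + 1) /
            (∏ j, (((ascPochhammer ℝ (n j)).eval (ν j + 1) : ℝ) : ℂ)) *
            ∏ j, (((a j ^ 2 / p ^ 2 : ℝ) : ℂ) ^ (n j) / ((n j).factorial : ℂ))) := by
  set z : ℂ := lam + (∑ j, ν j : ℝ) + 1 with hz
  set N : ℕ := ∑ j, n j with hN
  have hz₀ : 0 < z.re := by
    simp only [hz, Complex.add_re, Complex.ofReal_re, Complex.one_re]; linarith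
  have hzN : 0 < (z + 2 * N).re := by
    have : (z + 2 * N).re = z.re + 2 * N := by simp
    rw [this]; positivity
  set K : ℝ := ∏ j, (a j / 2) ^ (ν j + 2 * (n j : ℝ)) /
    (((n j).factorial : ℝ) * Real.Gamma (ν j + n j + 1)) with hK
  have hterm : ∀ x ∈ Set.Ioi (0 : ℝ), Complex.exp (-(p : ℂ) * x) * (x : ℂ) ^ lam *
        ((∏ j, (a j * x / 2) ^ (ν j + 2 * (n j : ℝ)) /
          (((n j).factorial : ℝ) * Real.Gamma (ν j + n j + 1)) : ℝ) : ℂ) =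
      K * ((x : ℂ) ^ (z + 2 * N - 1) * Complex.exp (-(p * x))) := by
    intro x hx
    have hx : 0 < x := hx
    have hprod : ∏ j, (a j * x / 2) ^ (ν j + 2 * (n j : ℝ)) /
          (((n j).factorial : ℝ) * Real.Gamma (ν j + n j + 1)) =
        K * ∏ j, x ^ (ν j + 2 * (n j : ℝ)) := by
      rw [hK, ← Finset.prod_mul_distrib]
      refine Finset.prod_congr rfl fun j _ ↦ ?_
      rw [mul_div_right_comm, Real.mul_rpow (by have := ha j; positivity) hx.le]
      ring
    have hexp : z + 2 * N - 1 = lam + (∑ j, (ν j + 2 * (n j : ℝ)) : ℝ) := by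
      rw [Finset.sum_add_distrib, ← Finset.mul_sum, hz, hN]
      push_cast
      ring
    rw [hprod, hexp, ← Complex.ofReal_cpow_mul_prod_rpow _ _ _ hx, Complex.ofReal_mul, neg_mul]
    ring
  rw [setIntegral_congr_fun measurableSet_Ioi hterm, integral_const_mul,
    Complex.integral_cpow_mul_exp_neg_mul_Ioi hzN hp, Complex.Gamma_add_two_mul_natCast hz₀]
  have hp' : (p : ℂ) ≠ 0 := Complex.ofReal_ne_zero.2 hp.ne'
  have hpow : (1 / (p : ℂ)) ^ (z + 2 * N) = 1 / (p : ℂ) ^ z * (1 / (p ^ 2) ^ N) := by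
    rw [one_div, Complex.inv_cpow _ _ (by
        rw [Complex.arg_ofReal_of_nonneg hp.le]; exact Real.pi_pos.ne), Complex.cpow_add _ _ hp',
      show (2 : ℂ) * N = ((2 * N : ℕ) : ℂ) by push_cast; rfl, Complex.cpow_natCast, pow_mul]
    field_simp
  have hKeq : K = (∏ j, a j ^ ν j / Real.Gamma (ν j + 1)) / 2 ^ (∑ j, ν j) *
      ((∏ j, ((a j ^ 2) ^ n j / ((n j).factorial : ℝ))) /
        ((∏ j, (ascPochhammer ℝ (n j)).eval (ν j + 1)) * 4 ^ N)) := by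
    rw [Real.rpow_sum_of_pos zero_lt_two, hN, ← Finset.prod_pow_eq_pow_sum,
      ← Finset.prod_mul_distrib, ← Finset.prod_div_distrib, ← Finset.prod_div_distrib,
      ← Finset.prod_mul_distrib, hK]
    refine Finset.prod_congr rfl fun j _ ↦ ?_
    have haj := ha j
    rw [Real.rpow_add (by positivity), Real.div_rpow haj.le zero_le_two,
      show 2 * (n j : ℝ) = ((2 * n j : ℕ) : ℝ) by push_cast; rfl, Real.rpow_natCast,
      add_right_comm, Real.Gamma_add_natCast (by linarith [hν j]), pow_mul, div_pow, div_pow]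
    norm_num
    ring
  have hsplit : ∏ j, (((a j ^ 2 / p ^ 2 : ℝ) : ℂ) ^ (n j) / ((n j).factorial : ℂ)) =
      (∏ j, (((a j : ℂ) ^ 2) ^ n j / ((n j).factorial : ℂ))) / ((p : ℂ) ^ 2) ^ N := by
    rw [hN, ← Finset.prod_pow_eq_pow_sum, ← Finset.prod_div_distrib]
    refine Finset.prod_congr rfl fun j _ ↦ ?_
    push_cast
    rw [div_pow]
    ring
  have htwo : ((2 ^ (∑ j, ν j) : ℝ) : ℂ) = (2 : ℂ) ^ ((∑ j, ν j : ℝ) : ℂ) := by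
    rw [Complex.ofReal_cpow zero_le_two]; norm_num
  have hhalf : (lam + (∑ j, ν j : ℝ)) / 2 + 1 = (z + 1) / 2 := by rw [hz]; ring
  rw [hpow, hKeq, hsplit, hhalf, ← htwo]
  push_cast
  field_simp

theorem integrableOn_exp_mul_rpow_mul_prod_besselI {d : ℕ} {ν a : Fin d → ℝ} {s p : ℝ}
    (hν : ∀ j, -1 < ν j) (hs : -1 < s + ∑ j, ν j) (ha : ∀ j, 0 < a j) (hp : ∑ j, a j < p) :
    IntegrableOn (fun x : ℝ ↦ Real.exp (-p * x) * x ^ s * ∏ j, besselI (ν j) (a j * x))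
      (Set.Ioi 0) := by
  obtain ⟨r, hr, hrp⟩ : ∃ r : ℝ, 1 < r ∧ r * ∑ j, a j < p := by
    have hc : Filter.Tendsto (fun r : ℝ ↦ r * ∑ j, a j) (nhdsWithin 1 (Set.Ioi 1))
        (nhds (1 * ∑ j, a j)) :=
      ((continuous_id.mul continuous_const).tendsto 1).mono_left nhdsWithin_le_nhds
    rw [one_mul] at hc
    obtain ⟨r, h₁, h₂⟩ := ((hc.eventually_lt_const hp).and self_mem_nhdsWithin).exists
    exact ⟨r, h₂, h₁⟩
  choose C hC hle using fun j ↦ exists_besselI_le (hν j) hr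
  have hint := integrableOn_rpow_mul_exp_neg_mul_rpow (p := 1) hs one_pos (sub_pos.2 hrp)
  refine (hint.const_mul (∏ j, C j * a j ^ ν j)).mono' ?_ ?_
  · have := fun j ↦ (measurable_besselI (ν j)).comp (measurable_const_mul (a j))
    refine Measurable.aestronglyMeasurable ?_
    exact (by fun_prop : Measurable fun x : ℝ ↦ Real.exp (-p * x) * x ^ s).mul
      (Finset.measurable_fun_prod _ fun j _ ↦ this j)
  · filter_upwards [ae_restrict_mem measurableSet_Ioi] with x hx
    have hx : 0 < x := hx
    have hax : ∀ j, 0 < a j * x := fun j ↦ mul_pos (ha j) hx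
    rw [Real.norm_of_nonneg (mul_nonneg (by positivity)
      (Finset.prod_nonneg fun j _ ↦ besselI_nonneg (hν j) (hax j)))]
    calc _ ≤ Real.exp (-p * x) * x ^ s *
          ∏ j, C j * (a j * x) ^ ν j * Real.exp (r * (a j * x)) := by
          gcongr with j
          · exact fun j _ ↦ besselI_nonneg (hν j) (hax j)
          · exact hle j _ (hax j)
      _ = Real.exp (-p * x) * x ^ s * ((∏ j, C j * a j ^ ν j) * (∏ j, x ^ ν j) *
          ∏ j, Real.exp (r * (a j * x))) := by
          rw [← Finset.prod_mul_distrib, ← Finset.prod_mul_distrib]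
          congr 1
          refine Finset.prod_congr rfl fun j _ ↦ ?_
          rw [Real.mul_rpow (ha j).le hx.le]
          ring
      _ = (∏ j, C j * a j ^ ν j) * (x ^ (s + ∑ j, ν j) *
          Real.exp (-(p - r * ∑ j, a j) * x ^ (1 : ℝ))) := by
          rw [← Real.rpow_sum_of_pos hx, ← Real.exp_sum, Real.rpow_add hx, Real.rpow_one,
            show -(p - r * ∑ j, a j) * x = -p * x + ∑ j, r * (a j * x) by
              rw [← Finset.mul_sum, ← Finset.sum_mul]; ring, Real.exp_add]
          ring

/-- Corrected Laplace transform formula (case `p > a₁ + ⋯ + a_d`):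
`∫₀^∞ e^{-px} x^λ ∏_j I_{ν_j}(a_j x) dx = Γ(λ+ν+1)/(2^ν p^{λ+ν+1}) ⬝ ∏_j a_j^{ν_j}/Γ(ν_j+1)
  ⬝ F_C^{(d)}((λ+ν+1)/2, (λ+ν)/2+1; ν₁+1, …, ν_d+1; a₁²/p², …, a_d²/p²)`,
with the integral converging absolutely. -/
theorem laplace_transform_prod_besselI (d : ℕ) (hd : 0 < d) (ν : Fin d → ℝ)
    (hν : ∀ j, -1 < ν j) (lam : ℂ) (hl : -1 < lam.re + ∑ j, ν j)
    (a : Fin d → ℝ) (ha : ∀ j, 0 < a j) (p : ℝ) (hp : ∑ j, a j < p) :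
    IntegrableOn
      (fun x : ℝ => Complex.exp (-(p : ℂ) * x) * (x : ℂ) ^ lam *
        ∏ j, (besselI (ν j) (a j * x) : ℂ)) (Set.Ioi 0) ∧
    (∫ x in Set.Ioi (0 : ℝ), Complex.exp (-(p : ℂ) * x) * (x : ℂ) ^ lam *
        ∏ j, (besselI (ν j) (a j * x) : ℂ)) =
      Complex.Gamma (lam + (∑ j, ν j : ℝ) + 1) /
          ((2 : ℂ) ^ ((∑ j, ν j : ℝ) : ℂ) * (p : ℂ) ^ (lam + (∑ j, ν j : ℝ) + 1)) *
        (∏ j, ((a j ^ (ν j) / Real.Gamma (ν j + 1) : ℝ) : ℂ)) *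
        ∑' n : Fin d → ℕ,
          (ascPochhammer ℂ (∑ j, n j)).eval ((lam + (∑ j, ν j : ℝ) + 1) / 2) *
            (ascPochhammer ℂ (∑ j, n j)).eval ((lam + (∑ j, ν j : ℝ)) / 2 + 1) /
            (∏ j, (((ascPochhammer ℝ (n j)).eval (ν j + 1) : ℝ) : ℂ)) *
            ∏ j, (((a j ^ 2 / p ^ 2 : ℝ) : ℂ) ^ (n j) / ((n j).factorial : ℂ)) := by
  have hp₀ : 0 < p := (Finset.sum_nonneg fun j _ ↦ (ha j).le).trans_lt hp
  have hreal := integrableOn_exp_mul_rpow_mul_prod_besselI hν hl ha hp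
  have hnorm : ∀ x : ℝ, 0 < x →
      ‖Complex.exp (-(p : ℂ) * x) * (x : ℂ) ^ lam‖ = Real.exp (-p * x) * x ^ lam.re := by
    intro x hx
    rw [norm_mul, Complex.norm_exp, Complex.norm_cpow_eq_rpow_re_of_pos hx]
    simp
  have hmeas : Measurable fun x : ℝ ↦ Complex.exp (-(p : ℂ) * x) * (x : ℂ) ^ lam := by fun_prop
  have hpos : ∀ x : ℝ, 0 < x → ∀ j, 0 < a j * x := fun x hx j ↦ mul_pos (ha j) hx
  have hsum : ∀ x : ℝ, 0 < x → HasSum (fun n : Fin d → ℕ ↦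
      ∏ j, (a j * x / 2) ^ (ν j + 2 * (n j : ℝ)) /
        (((n j).factorial : ℝ) * Real.Gamma (ν j + n j + 1)))
      (∏ j, besselI (ν j) (a j * x)) := fun x hx ↦
    hasSum_prod_pi_of_nonneg
      (f := fun j (k : ℕ) ↦ (a j * x / 2) ^ (ν j + 2 * (k : ℝ)) /
        ((k.factorial : ℝ) * Real.Gamma (ν j + k + 1)))
      (fun j k ↦ (besselI_term_pos (hν j) (hpos x hx j) k).le)
      fun j ↦ hasSum_besselI (hν j) (hpos x hx j)
  refine ⟨Integrable.mono' hreal ?_ ?_, ?_⟩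
  · have := fun j ↦ (measurable_besselI (ν j)).comp (measurable_const_mul (a j))
    exact (hmeas.mul (Finset.measurable_fun_prod _ fun j _ ↦
      Complex.measurable_ofReal.comp (this j))).aestronglyMeasurable
  · filter_upwards [ae_restrict_mem measurableSet_Ioi] with x hx
    rw [norm_mul, hnorm x hx, ← Complex.ofReal_prod, Complex.norm_of_nonneg
      (Finset.prod_nonneg fun j _ ↦ besselI_nonneg (hν j) (hpos x hx j))]
  · have key : HasSum (fun n : Fin d → ℕ ↦ ∫ x in Set.Ioi (0 : ℝ),
        Complex.exp (-(p : ℂ) * x) * (x : ℂ) ^ lam *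
          ((∏ j, (a j * x / 2) ^ (ν j + 2 * (n j : ℝ)) /
            (((n j).factorial : ℝ) * Real.Gamma (ν j + n j + 1)) : ℝ) : ℂ))
        (∫ x in Set.Ioi (0 : ℝ), Complex.exp (-(p : ℂ) * x) * (x : ℂ) ^ lam *
          ∏ j, (besselI (ν j) (a j * x) : ℂ)) := by
      refine hasSum_integral_of_dominated_convergence
        (fun n x ↦ Real.exp (-p * x) * x ^ lam.re *
          ∏ j, (a j * x / 2) ^ (ν j + 2 * (n j : ℝ)) /
            (((n j).factorial : ℝ) * Real.Gamma (ν j + n j + 1)))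
        (fun n ↦ ?_) (fun n ↦ ?_) ?_ (Integrable.congr hreal ?_) ?_
      · exact (hmeas.mul (by fun_prop)).aestronglyMeasurable
      · filter_upwards [ae_restrict_mem measurableSet_Ioi] with x hx
        rw [norm_mul, hnorm x hx, Complex.norm_of_nonneg
          (Finset.prod_nonneg fun j _ ↦ (besselI_term_pos (hν j) (hpos x hx j) _).le)]
      · filter_upwards [ae_restrict_mem measurableSet_Ioi] with x hx
        exact (hsum x hx).summable.mul_left _
      · filter_upwards [ae_restrict_mem measurableSet_Ioi] with x hx
        exact ((hsum x hx).mul_left _).tsum_eq.symm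
      · filter_upwards [ae_restrict_mem measurableSet_Ioi] with x hx
        rw [← Complex.ofReal_prod]
        exact (Complex.hasSum_ofReal.2 (hsum x hx)).mul_left _
    rw [← key.tsum_eq, ← tsum_mul_left]
    exact tsum_congr fun n ↦ integral_laplace_prod_besselI_term hν hl ha hp₀ n
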